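/- Let F̄ = {z ∈ ℍ² : |Re z| ≤ 1/2 and |z| ≥ 1} be the closure of the standard fundamental domain of the modular group SL(2,ℤ). Then for all z₁, z₂ ∈ F̄, the infimum inf_{γ ∈ SL(2,ℤ)} d(z₁, γ·z₂) is attained at one of the following ten elements (viewed up to sign, i.e. as elements of PSL(2,ℤ)): the identity, (1 1; 0 1), (1 −1; 0 1), (1 0; 1 1), (1 0; −1 1), (0 −1; 1 1), (0 −1; 1 −1), (1 −1; 1 0), (−1 −1; 1 0), and (0 −1; 1 0). Consequently, the geodesic-covering number of PSL(2,ℤ) is at most 10. -/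

import Mathlib

open scoped UpperHalfPlane MatrixGroups

noncomputable section

/-- The closure of the standard fundamental domain of the modular group:
`{z ∈ ℍ² : |Re z| ≤ 1/2 and |z| ≥ 1}`. -/
def modularFundClosure : Set ℍ :=
  {z | |z.re| ≤ 1 / 2 ∧ 1 ≤ ‖(z : ℂ)‖}

def M1 : SL(2, ℤ) := 1
def M2 : SL(2, ℤ) := ⟨!![1, 1; 0, 1], by norm_num [Matrix.det_fin_two_of]⟩
def M3 : SL(2, ℤ) := ⟨!![1, -1; 0, 1], by norm_num [Matrix.det_fin_two_of]⟩
def M4 : SL(2, ℤ) := ⟨!![1, 0; 1, 1], by norm_num [Matrix.det_fin_two_of]⟩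
def M5 : SL(2, ℤ) := ⟨!![1, 0; -1, 1], by norm_num [Matrix.det_fin_two_of]⟩
def M6 : SL(2, ℤ) := ⟨!![0, -1; 1, 1], by norm_num [Matrix.det_fin_two_of]⟩
def M7 : SL(2, ℤ) := ⟨!![0, -1; 1, -1], by norm_num [Matrix.det_fin_two_of]⟩
def M8 : SL(2, ℤ) := ⟨!![1, -1; 1, 0], by norm_num [Matrix.det_fin_two_of]⟩
def M9 : SL(2, ℤ) := ⟨!![-1, -1; 1, 0], by norm_num [Matrix.det_fin_two_of]⟩
def M10 : SL(2, ℤ) := ⟨!![0, -1; 1, 0], by norm_num [Matrix.det_fin_two_of]⟩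

open UpperHalfPlane ModularGroup Modular

/-!
At a fixed height, hyperbolic distance increases with horizontal distance, so the best translate
`T ^ n • w` is the one whose real part is nearest to that of `z`. Let `c` be the lower left entry
of an element of `SL(2, ℤ)`; up to sign, the elements with `c = 0` are the powers of `T` and those
with `|c| = 1` are the words `T ^ a * S * T ^ d`.

* If `c = 0`, the real parts of `z` and `w` differ by at most `1`, so `|n| ≤ 1` suffices.
* If `|c| = 1`, note that `S` maps every integer translate of the fundamental domain into the unit
  disc, so that the competing real parts differ by at most `3 / 2`. Moving `S` to the other side of
  the distance bounds `d`, and then `a`, by `1` in absolute value. Moreover `S • T ^ d • w` lies on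
  the opposite side of the imaginary axis from `d`, so `a` may be taken with the sign of `d`: this
  removes `(1, -1)` and `(-1, 1)` and leaves seven words.
* If `|c| ≥ 2`, the image of `w` is so low that `exp d(z, γ • w) ≥ c² Im z Im w ≥ 4 Im z Im w`,
  while the nearest translate of `w` satisfies `exp d(z, T ^ n • w) ≤ 4 Im z Im w`.
-/

lemma exists_mem_iInf_eq_of_finite {ι α : Type*} [ConditionallyCompleteLinearOrder α]
    {f : ι → α} {s : Set ι} (hfin : s.Finite) (hne : s.Nonempty)
    (hdom : ∀ i, ∃ j ∈ s, f j ≤ f i) : ∃ j ∈ s, ⨅ i, f i = f j := by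
  obtain ⟨j, hj, hmin⟩ := s.exists_min_image f hfin hne
  have hleast : IsLeast (Set.range f) (f j) := by
    refine ⟨Set.mem_range_self j, Set.forall_mem_range.2 fun i ↦ ?_⟩
    obtain ⟨k, hk, hle⟩ := hdom i
    exact (hmin k hk).trans hle
  exact ⟨j, hj, hleast.csInf_eq⟩

section Metric

lemma dist_le_dist_of_im_eq {z w w' : ℍ} (him : w.im = w'.im)
    (hre : |z.re - w.re| ≤ |z.re - w'.re|) : dist z w ≤ dist z w' := by
  have hcosh : Real.cosh (dist z w) ≤ Real.cosh (dist z w') := by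
    have hsq := sq_le_sq.2 hre
    have := w'.im_pos
    rw [cosh_dist', cosh_dist', him]
    gcongr
  simpa only [Real.cosh_le_cosh, abs_of_nonneg dist_nonneg] using hcosh

lemma exp_dist_le_four_mul_im_mul_im {z w : ℍ} (hre : |z.re - w.re| ≤ 1 / 2)
    (hz : 1 / 2 ≤ z.im ^ 2) (hw : 1 / 2 ≤ w.im ^ 2) :
    Real.exp (dist z w) ≤ 4 * z.im * w.im := by
  have hzpos := z.im_pos
  have hwpos := w.im_pos
  have hcosh : Real.cosh (dist z w) ≤ Real.cosh (Real.log (4 * z.im * w.im)) := by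
    have hre_sq : (z.re - w.re) ^ 2 ≤ 1 / 4 := by
      simpa only [sq_abs, div_pow, one_pow, show (2 : ℝ) ^ 2 = 4 by norm_num]
        using pow_le_pow_left₀ (abs_nonneg _) hre 2
    have him_sq : z.im ^ 2 + w.im ^ 2 ≤ 4 * z.im ^ 2 * w.im ^ 2 := by nlinarith
    calc Real.cosh (dist z w)
        = ((z.re - w.re) ^ 2 + z.im ^ 2 + w.im ^ 2) / (2 * z.im * w.im) := cosh_dist' z w
      _ ≤ (1 / 4 + 4 * z.im ^ 2 * w.im ^ 2) / (2 * z.im * w.im) := by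
        gcongr ?_ / _
        linarith
      _ = Real.cosh (Real.log (4 * z.im * w.im)) := by
        rw [Real.cosh_log (by positivity)]
        field_simp
        ring
  have hone : 1 ≤ 4 * z.im * w.im := by nlinarith
  rw [Real.cosh_le_cosh, abs_of_nonneg dist_nonneg, abs_of_nonneg (Real.log_nonneg hone)] at hcosh
  exact (Real.le_log_iff_exp_le (by positivity)).1 hcosh

lemma sq_c_mul_im_mul_im_smul_le_abs_det (g : GL (Fin 2) ℝ) (w : ℍ) :
    g 1 0 ^ 2 * w.im * (g • w).im ≤ |g.det.val| := by
  have hdenom := c_mul_im_sq_le_normSq_denom g w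
  have hpos : 0 < Complex.normSq (denom g w) := normSq_denom_pos g w.im_ne_zero
  rw [UpperHalfPlane.im_smul_eq_div_normSq, mul_div_assoc', div_le_iff₀ hpos]
  calc g 1 0 ^ 2 * w.im * (|g.det.val| * w.im)
      = |g.det.val| * (g 1 0 * w.im) ^ 2 := by ring
    _ ≤ |g.det.val| * Complex.normSq (denom g w) := by gcongr

lemma sq_c_mul_im_mul_im_le_abs_det_mul_exp_dist (g : GL (Fin 2) ℝ) (z w : ℍ) :
    g 1 0 ^ 2 * z.im * w.im ≤ |g.det.val| * Real.exp (dist z (g • w)) := by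
  calc g 1 0 ^ 2 * z.im * w.im
      ≤ g 1 0 ^ 2 * ((g • w).im * Real.exp (dist z (g • w))) * w.im := by
        gcongr
        exact im_le_im_mul_exp_dist z (g • w)
    _ = g 1 0 ^ 2 * w.im * (g • w).im * Real.exp (dist z (g • w)) := by ring
    _ ≤ |g.det.val| * Real.exp (dist z (g • w)) := by
        gcongr
        exact sq_c_mul_im_mul_im_smul_le_abs_det g w

end Metric

section Translation

variable {z w : ℍ}

lemma exists_int_mem_Icc_forall_abs_sub_le {x : ℝ} {lo hi : ℤ} (hle : lo ≤ hi)
    (hlo : lo - 1 / 2 ≤ x) (hhi : x ≤ hi + 1 / 2) :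
    ∃ n ∈ Set.Icc lo hi, ∀ m : ℤ, |x - n| ≤ |x - m| := by
  suffices hnear : ∃ n ∈ Set.Icc lo hi, |x - n| ≤ 1 / 2 by
    obtain ⟨n, hn, hxn⟩ := hnear
    refine ⟨n, hn, fun m ↦ ?_⟩
    obtain rfl | hne := eq_or_ne m n
    · rfl
    · have hmn : (1 : ℝ) ≤ |(m : ℝ) - n| := by
        exact_mod_cast Int.one_le_abs (sub_ne_zero.2 hne)
      have htri := abs_sub_le (m : ℝ) x n
      rw [abs_sub_comm (m : ℝ) x] at htri
      linarith
  rcases le_total x lo with hx | hx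
  · exact ⟨lo, ⟨le_rfl, hle⟩, abs_le.2 ⟨by linarith, by linarith⟩⟩
  · have hceil := Int.le_ceil (x - 1 / 2)
    have hceil' := Int.ceil_lt_add_one (x - 1 / 2)
    refine ⟨⌈x - 1 / 2⌉, ⟨?_, Int.ceil_le.2 (by linarith)⟩,
      abs_le.2 ⟨by linarith, by linarith⟩⟩
    exact Int.le_of_sub_one_lt (Int.lt_ceil.2 (by push_cast; linarith))

lemma dist_T_zpow_smul_le_dist_T_zpow_smul {m n : ℤ}
    (h : |z.re - w.re - n| ≤ |z.re - w.re - m|) :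
    dist z (T ^ n • w) ≤ dist z (T ^ m • w) := by
  apply dist_le_dist_of_im_eq
  · simp only [im_T_zpow_smul]
  · simpa only [re_T_zpow_smul, sub_add_eq_sub_sub] using h

lemma exists_mem_Icc_forall_dist_T_zpow_smul_le {lo hi : ℤ} (hle : lo ≤ hi)
    (hlo : lo - 1 / 2 ≤ z.re - w.re) (hhi : z.re - w.re ≤ hi + 1 / 2) :
    ∃ n ∈ Set.Icc lo hi, ∀ m : ℤ, dist z (T ^ n • w) ≤ dist z (T ^ m • w) := by
  obtain ⟨n, hn, hmin⟩ := exists_int_mem_Icc_forall_abs_sub_le hle hlo hhi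
  exact ⟨n, hn, fun m ↦ dist_T_zpow_smul_le_dist_T_zpow_smul (hmin m)⟩

lemma exists_dist_T_zpow_smul_le_of_two_le_abs_c {g : SL(2, ℤ)} (hz : 1 / 2 ≤ z.im ^ 2)
    (hw : 1 / 2 ≤ w.im ^ 2) (hc : 2 ≤ |g 1 0|) :
    ∃ n : ℤ, dist z (T ^ n • w) ≤ dist z (g • w) := by
  refine ⟨round (z.re - w.re), Real.exp_le_exp.1 ?_⟩
  set n := round (z.re - w.re)
  have hre : |z.re - (T ^ n • w).re| ≤ 1 / 2 := by
    rw [re_T_zpow_smul, sub_add_eq_sub_sub]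
    exact abs_sub_round _
  have hc_sq : (4 : ℝ) ≤ (g 1 0 : ℝ) ^ 2 := by
    exact_mod_cast (by nlinarith [sq_abs (g 1 0)] : 4 ≤ g 1 0 ^ 2)
  calc Real.exp (dist z (T ^ n • w))
      ≤ 4 * z.im * (T ^ n • w).im :=
        exp_dist_le_four_mul_im_mul_im hre hz (by rwa [im_T_zpow_smul])
    _ ≤ (g 1 0 : ℝ) ^ 2 * z.im * w.im := by
        rw [im_T_zpow_smul]
        gcongr
    _ ≤ Real.exp (dist z (g • w)) := by
        simpa using sq_c_mul_im_mul_im_le_abs_det_mul_exp_dist (g : GL (Fin 2) ℝ) z w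

end Translation

section Inversion

variable {z w : ℍ}

instance : IsIsometricSMul SL(2, ℤ) ℍ :=
  ⟨fun g ↦ isometry_smul ℍ (g : SL(2, ℝ))⟩

lemma re_S_smul (z : ℍ) : (S • z).re = -z.re / Complex.normSq z := by
  rw [modular_S_smul, ← coe_re]
  simp [Complex.inv_re, neg_div]

lemma abs_re_S_smul_le_one (hz : 1 ≤ Complex.normSq z) : |(S • z).re| ≤ 1 := by
  have hnorm : 1 ≤ ‖(z : ℂ)‖ := Complex.one_le_normSq_iff.1 hz
  rw [re_S_smul, abs_div, abs_neg, abs_of_nonneg (Complex.normSq_nonneg _),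
    div_le_one (by linarith), Complex.normSq_eq_norm_sq]
  calc |z.re| ≤ ‖(z : ℂ)‖ := Complex.abs_re_le_norm z
    _ ≤ ‖(z : ℂ)‖ ^ 2 := le_self_pow₀ hnorm two_ne_zero

lemma re_S_smul_nonneg (hz : z.re ≤ 0) : 0 ≤ (S • z).re := by
  rw [re_S_smul]
  exact div_nonneg (neg_nonneg.2 hz) (Complex.normSq_nonneg _)

lemma re_S_smul_nonpos (hz : 0 ≤ z.re) : (S • z).re ≤ 0 := by
  rw [re_S_smul]
  exact div_nonpos_of_nonpos_of_nonneg (neg_nonpos.2 hz) (Complex.normSq_nonneg _)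

lemma one_le_normSq_T_zpow_smul (hz : z ∈ 𝒟) (n : ℤ) :
    1 ≤ Complex.normSq (T ^ n • z : ℍ) := by
  have hnorm := hz.1
  obtain ⟨hlo, hhi⟩ := abs_le.1 hz.2
  have hshift : 0 ≤ (n : ℝ) * (2 * z.re + n) := by
    rcases lt_trichotomy n 0 with hn | rfl | hn
    · have : (n : ℝ) ≤ -1 := by exact_mod_cast Int.le_sub_one_of_lt hn
      nlinarith
    · simp
    · have : (1 : ℝ) ≤ n := by exact_mod_cast hn
      nlinarith
  rw [Complex.normSq_apply, coe_re, coe_im] at hnorm ⊢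
  rw [re_T_zpow_smul, im_T_zpow_smul]
  linarith

lemma S_smul_S_smul (z : ℍ) : S • S • z = z := by
  have hSS : S * S = -1 := Subtype.ext S_mul_S_eq
  rw [smul_smul, hSS, SL_neg_smul, one_smul]

lemma dist_T_zpow_mul_S_mul_T_zpow_smul (z w : ℍ) (a d : ℤ) :
    dist z ((T ^ a * S * T ^ d) • w) = dist (S • T ^ (-a) • z) (T ^ d • w) := by
  rw [← dist_smul (T ^ a * S) (S • T ^ (-a) • z)]
  simp only [mul_smul, S_smul_S_smul, zpow_neg, smul_inv_smul]

lemma exists_right_zpow_mem_Icc_forall_dist_le (hz : z ∈ 𝒟) (hw : |w.re| ≤ 1 / 2) (a : ℤ) :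
    ∃ d ∈ Set.Icc (-1 : ℤ) 1, ∀ d' : ℤ,
      dist z ((T ^ a * S * T ^ d) • w) ≤ dist z ((T ^ a * S * T ^ d') • w) := by
  have hz_re := abs_le.1 (abs_re_S_smul_le_one (one_le_normSq_T_zpow_smul hz (-a)))
  have hw_re := abs_le.1 hw
  simp only [dist_T_zpow_mul_S_mul_T_zpow_smul]
  apply exists_mem_Icc_forall_dist_T_zpow_smul_le <;> push_cast <;> linarith

lemma exists_left_zpow_mem_Icc_forall_dist_le (hz : |z.re| ≤ 1 / 2) (hw : w ∈ 𝒟) (d : ℤ) :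
    ∃ a ∈ Set.Icc (-1 : ℤ) 1, a * d ≠ -1 ∧ ∀ a' : ℤ,
      dist z ((T ^ a * S * T ^ d) • w) ≤ dist z ((T ^ a' * S * T ^ d) • w) := by
  have hz_re := abs_le.1 hz
  have hw_re := abs_le.1 hw.2
  have hw_S := abs_le.1 (abs_re_S_smul_le_one (one_le_normSq_T_zpow_smul hw d))
  have hd_re := re_T_zpow_smul w d
  simp only [mul_smul]
  obtain hd | rfl | hd := lt_trichotomy d 0
  · have hd' : (d : ℝ) ≤ -1 := mod_cast Int.le_sub_one_of_lt hd
    have hS : 0 ≤ (S • T ^ d • w).re := re_S_smul_nonneg (by linarith)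
    obtain ⟨a, ha, hmin⟩ := exists_mem_Icc_forall_dist_T_zpow_smul_le
      (z := z) (w := S • T ^ d • w) (lo := -1) (hi := 0) (by simp)
      (by push_cast; linarith) (by push_cast; linarith)
    have had : 0 ≤ a * d := mul_nonneg_of_nonpos_of_nonpos ha.2 hd.le
    exact ⟨a, ⟨ha.1, ha.2.trans zero_le_one⟩, by lia, hmin⟩
  · obtain ⟨a, ha, hmin⟩ := exists_mem_Icc_forall_dist_T_zpow_smul_le
      (z := z) (w := S • T ^ (0 : ℤ) • w) (lo := -1) (hi := 1) (by simp)
      (by push_cast; linarith) (by push_cast; linarith)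
    exact ⟨a, ha, by simp, hmin⟩
  · have hd' : (1 : ℝ) ≤ d := mod_cast hd
    have hS : (S • T ^ d • w).re ≤ 0 := re_S_smul_nonpos (by linarith)
    obtain ⟨a, ha, hmin⟩ := exists_mem_Icc_forall_dist_T_zpow_smul_le
      (z := z) (w := S • T ^ d • w) (lo := 0) (hi := 1) (by simp)
      (by push_cast; linarith) (by push_cast; linarith)
    have had : 0 ≤ a * d := mul_nonneg ha.1 hd.le
    exact ⟨a, ⟨by linarith [ha.1], ha.2⟩, by lia, hmin⟩

end Inversion

section Covering

variable {z w : ℍ}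

/-- The ten candidate minimizers of `γ ↦ d(z, γ·w)` on the fundamental domain. Each class of
`PSL(2, ℤ)` among them is represented by one of its two lifts to `SL(2, ℤ)`. -/
def coveringElements : Set SL(2, ℤ) :=
  {M1, M2, M3, M4, M5, M6, M7, M8, M9, M10}

lemma finite_coveringElements : coveringElements.Finite := by
  simp [coveringElements]

lemma modularFundClosure_eq_fd : modularFundClosure = 𝒟 := by
  ext z
  rw [fd, Set.mem_ofPred_eq, Complex.one_le_normSq_iff, and_comm]
  rfl

lemma T_zpow_mem_coveringElements {n : ℤ} (hn : n ∈ Set.Icc (-1 : ℤ) 1) :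
    T ^ n ∈ coveringElements := by
  obtain ⟨hn₁, hn₂⟩ := hn
  obtain rfl | rfl | rfl : n = -1 ∨ n = 0 ∨ n = 1 := by lia
  · have : T ^ (-1 : ℤ) = M3 := Subtype.ext (coe_T_zpow (-1))
    simp [coveringElements, this]
  · have : T ^ (0 : ℤ) = M1 := zpow_zero T
    simp [coveringElements, this]
  · have : T ^ (1 : ℤ) = M2 := zpow_one T
    simp [coveringElements, this]

lemma coe_T_zpow_mul_S_mul_T_zpow (a d : ℤ) :
    ((T ^ a * S * T ^ d : SL(2, ℤ)) : Matrix (Fin 2) (Fin 2) ℤ) = !![a, a * d - 1; 1, d] := by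
  simp [coe_T_zpow, coe_S, -map_zpow, sub_eq_add_neg]

lemma T_zpow_mul_S_mul_T_zpow_mem_coveringElements_or_neg_mem {a d : ℤ}
    (ha : a ∈ Set.Icc (-1 : ℤ) 1) (hd : d ∈ Set.Icc (-1 : ℤ) 1) (had : a * d ≠ -1) :
    T ^ a * S * T ^ d ∈ coveringElements ∨ -(T ^ a * S * T ^ d) ∈ coveringElements := by
  have hcoe := coe_T_zpow_mul_S_mul_T_zpow a d
  obtain ⟨ha₁, ha₂⟩ := ha
  obtain ⟨hd₁, hd₂⟩ := hd
  obtain rfl | rfl | rfl : a = -1 ∨ a = 0 ∨ a = 1 := by lia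
  · obtain rfl | rfl : d = -1 ∨ d = 0 := by lia
    · right
      have : -(T ^ (-1 : ℤ) * S * T ^ (-1 : ℤ)) = M5 :=
        Subtype.ext (by rw [Matrix.SpecialLinearGroup.coe_neg, hcoe]; simp [M5])
      rw [this]
      simp [coveringElements]
    · have : T ^ (-1 : ℤ) * S * T ^ (0 : ℤ) = M9 := Subtype.ext hcoe
      rw [this]
      simp [coveringElements]
  · obtain rfl | rfl | rfl : d = -1 ∨ d = 0 ∨ d = 1 := by lia
    · have : T ^ (0 : ℤ) * S * T ^ (-1 : ℤ) = M7 := Subtype.ext hcoe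
      rw [this]
      simp [coveringElements]
    · have : T ^ (0 : ℤ) * S * T ^ (0 : ℤ) = M10 := Subtype.ext hcoe
      rw [this]
      simp [coveringElements]
    · have : T ^ (0 : ℤ) * S * T ^ (1 : ℤ) = M6 := Subtype.ext hcoe
      rw [this]
      simp [coveringElements]
  · obtain rfl | rfl : d = 0 ∨ d = 1 := by lia
    · have : T ^ (1 : ℤ) * S * T ^ (0 : ℤ) = M8 := Subtype.ext hcoe
      rw [this]
      simp [coveringElements]
    · have : T ^ (1 : ℤ) * S * T ^ (1 : ℤ) = M4 := Subtype.ext hcoe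
      rw [this]
      simp [coveringElements]

lemma exists_smul_eq_T_zpow_mul_S_mul_T_zpow_smul {g : SL(2, ℤ)} (hc : |g 1 0| = 1) :
    ∃ a d : ℤ, ∀ z : ℍ, g • z = (T ^ a * S * T ^ d) • z := by
  rcases eq_or_eq_neg_of_abs_eq hc with hc | hc
  · exact ⟨g 0 0, g 1 1, fun z ↦ congrArg (· • z) (g_eq_of_c_eq_one hc)⟩
  · have hc_neg : (-g) 1 0 = 1 := by simp [hc]
    exact ⟨(-g) 0 0, (-g) 1 1, fun z ↦ by rw [← g_eq_of_c_eq_one hc_neg, SL_neg_smul]⟩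

lemma exists_mem_coveringElements_dist_smul_le_dist_T_zpow_smul (hz : |z.re| ≤ 1 / 2)
    (hw : |w.re| ≤ 1 / 2) (m : ℤ) :
    ∃ γ ∈ coveringElements, dist z (γ • w) ≤ dist z (T ^ m • w) := by
  have hz_re := abs_le.1 hz
  have hw_re := abs_le.1 hw
  obtain ⟨n, hn, hmin⟩ := exists_mem_Icc_forall_dist_T_zpow_smul_le
    (z := z) (w := w) (lo := -1) (hi := 1) (by simp)
    (by push_cast; linarith) (by push_cast; linarith)
  exact ⟨T ^ n, T_zpow_mem_coveringElements hn, hmin m⟩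

lemma exists_mem_coveringElements_dist_smul_le_dist_T_zpow_mul_S_mul_T_zpow_smul
    (hz : z ∈ 𝒟) (hw : w ∈ 𝒟) (a d : ℤ) :
    ∃ γ ∈ coveringElements, dist z (γ • w) ≤ dist z ((T ^ a * S * T ^ d) • w) := by
  obtain ⟨d₀, hd₀, hd_min⟩ := exists_right_zpow_mem_Icc_forall_dist_le hz hw.2 a
  obtain ⟨a₀, ha₀, had₀, ha_min⟩ := exists_left_zpow_mem_Icc_forall_dist_le hz.2 hw d₀
  have hle := (ha_min a).trans (hd_min d)
  rcases T_zpow_mul_S_mul_T_zpow_mem_coveringElements_or_neg_mem ha₀ hd₀ had₀ with hmem | hmem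
  · exact ⟨_, hmem, hle⟩
  · exact ⟨_, hmem, by rwa [SL_neg_smul]⟩

lemma exists_mem_coveringElements_dist_smul_le (hz : z ∈ 𝒟) (hw : w ∈ 𝒟) (g : SL(2, ℤ)) :
    ∃ γ ∈ coveringElements, dist z (γ • w) ≤ dist z (g • w) := by
  have hz_im := three_le_four_mul_im_sq_of_mem_fd hz
  have hw_im := three_le_four_mul_im_sq_of_mem_fd hw
  obtain hc | hc | hc : g 1 0 = 0 ∨ |g 1 0| = 1 ∨ 2 ≤ |g 1 0| := by
    rcases eq_or_ne (g 1 0) 0 with hc | hc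
    · exact Or.inl hc
    · exact Or.inr ((Int.one_le_abs hc).eq_or_lt.imp Eq.symm id)
  · obtain ⟨n, hn⟩ := exists_eq_T_zpow_of_c_eq_zero hc
    rw [hn]
    exact exists_mem_coveringElements_dist_smul_le_dist_T_zpow_smul hz.2 hw.2 n
  · obtain ⟨a, d, had⟩ := exists_smul_eq_T_zpow_mul_S_mul_T_zpow_smul hc
    rw [had]
    exact exists_mem_coveringElements_dist_smul_le_dist_T_zpow_mul_S_mul_T_zpow_smul hz hw a d
  · obtain ⟨n, hn⟩ := exists_dist_T_zpow_smul_le_of_two_le_abs_c (z := z) (w := w) (g := g)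
      (by linarith) (by linarith) hc
    obtain ⟨γ, hγ, hle⟩ := exists_mem_coveringElements_dist_smul_le_dist_T_zpow_smul hz.2 hw.2 n
    exact ⟨γ, hγ, hle.trans hn⟩

end Covering

/-- For all `z₁, z₂` in the closure of the standard fundamental domain of `SL(2,ℤ)`,
the infimum `inf_{γ ∈ SL(2,ℤ)} d(z₁, γ·z₂)` is attained at one of ten explicit
elements; consequently the geodesic-covering number of `PSL(2,ℤ)` is at most `10`. -/
theorem modular_geodesic_cover_ten (z₁ z₂ : ℍ)
    (h₁ : z₁ ∈ modularFundClosure) (h₂ : z₂ ∈ modularFundClosure) :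
    ∃ γ : SL(2, ℤ),
      (γ = M1 ∨ γ = M2 ∨ γ = M3 ∨ γ = M4 ∨ γ = M5 ∨
        γ = M6 ∨ γ = M7 ∨ γ = M8 ∨ γ = M9 ∨ γ = M10) ∧
      (⨅ γ' : SL(2, ℤ), dist z₁ (γ' • z₂)) = dist z₁ (γ • z₂) := by
  rw [modularFundClosure_eq_fd] at h₁ h₂
  obtain ⟨γ, hγ, hmin⟩ := exists_mem_iInf_eq_of_finite finite_coveringElements
    ⟨M1, Or.inl rfl⟩ (exists_mem_coveringElements_dist_smul_le h₁ h₂)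
  exact ⟨γ, hγ, hmin⟩

end
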